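/- Let z_{1,1}, …, z_{1,N} ∈ ℝ^{q_1}, define I_1(w) = Σ_{i=1}^N w_i z_{1,i} z_{1,i}ᵀ and Φ_1(w) = −λ_min(I_1(w)). For k = 2, …, K, let z_{k,1}, …, z_{k,N} ∈ ℝ^{q_k}, I_k(w) = Σ_i w_i z_{k,i} z_{k,i}ᵀ, and Φ_k(w) = φ_k(I_k(w)) with φ_k convex on q_k×q_k matrices and differentiable at I_k(w*). Let w* ∈ Ω and η_2, …, η_K ≥ 0. Suppose the eigenspace of I_1(w*) associated with λ_min(I_1(w*)) is one-dimensional, spanned by a unit eigenvector v*. Then w* minimizes Φ_1 + Σ_{k=2}^K η_k Φ_k over Ω if and only if (v*ᵀ z_{1,i})² − λ_min(I_1(w*)) + Σ_{k=2}^K η_k d_k(i, w*) ≤ 0 for all i = 1, …, N, where d_k(i, w*) = trace(∇φ_k(I_k(w*))ᵀ (I_k(w*) − z_{k,i} z_{k,i}ᵀ)). -/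

import Mathlib

open Finset Matrix

noncomputable section

attribute [local instance] Matrix.normedAddCommGroup Matrix.normedSpace

/-- Dot product of two real vectors indexed by a finite type. -/
def dotp {α : Type*} [Fintype α] (g w : α → ℝ) : ℝ := ∑ i, g i * w i

/-- The probability simplex Ω in ℝ^N. -/
def simplex (N : ℕ) : Set (Fin N → ℝ) := {w | (∑ i, w i) = 1 ∧ ∀ i, 0 ≤ w i}

/-- The subdifferential of a convex function `Φ : ℝ^N → ℝ` at `w`. -/
def subdiff {N : ℕ} (Φ : (Fin N → ℝ) → ℝ) (w : Fin N → ℝ) : Set (Fin N → ℝ) :=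
  {g | ∀ w', dotp g (w' - w) ≤ Φ w' - Φ w}

/-- The i-th standard basis vector of ℝ^N. -/
def stdBasis {N : ℕ} (i : Fin N) : Fin N → ℝ := fun j => if j = i then 1 else 0

/-- The information matrix `I(w) = Σ_i w_i z_i z_iᵀ`. -/
def infoMat {N q : ℕ} (z : Fin N → Fin q → ℝ) (w : Fin N → ℝ) :
    Matrix (Fin q) (Fin q) ℝ := ∑ i, w i • Matrix.vecMulVec (z i) (z i)

/-- The smallest eigenvalue of a (symmetric) real matrix `M`. -/
def lambdaMin {q : ℕ} (M : Matrix (Fin q) (Fin q) ℝ) : ℝ :=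
  sInf {r : ℝ | ∃ v : Fin q → ℝ, v ≠ 0 ∧ M.mulVec v = r • v}

/-!
On unit vectors `λ_min(M) = min vᵀMv`, so `-λ_min ∘ I₁` is convex, and Danskin's envelope theorem
differentiates `λ_min` along lines: when the minimiser `±v*` is unique up to sign, the derivative
of `t ↦ λ_min(A + tB)` at `0` is `v*ᵀBv*`. The objective is therefore convex and has at `w*` the
directional derivatives `d ↦ g ⬝ d`, where `gᵢ = -(v*ᵀz₁ᵢ)² + ∑ₖ ηₖ ⟨∇φₖ, zₖᵢzₖᵢᵀ⟩`. Such a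
function is minimised over the simplex at `w*` exactly when `g ⬝ w* ≤ gᵢ` for every `i`, which is
the stated condition because `g ⬝ w* = -λ_min(I₁(w*)) + ∑ₖ ηₖ ⟨∇φₖ, Iₖ(w*)⟩`.
-/

open Filter Topology

section FirstOrder

variable {E : Type*} [AddCommGroup E] [Module ℝ E] {s : Set E} {f : E → ℝ} {x y : E}

theorem lineDeriv_nonneg_of_isMinOn {f' : ℝ} (hs : Convex ℝ s) (hx : x ∈ s) (hy : y ∈ s)
    (hmin : IsMinOn f s x) (hf : HasLineDerivAt ℝ f f' x (y - x)) : 0 ≤ f' := by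
  refine ge_of_tendsto hf.tendsto_slope_zero_right ?_
  filter_upwards [Ioc_mem_nhdsGT one_pos] with t ht
  have hmem : x + t • (y - x) ∈ s := hs.add_smul_sub_mem hx hy (Set.Ioc_subset_Icc_self ht)
  exact smul_nonneg (inv_nonneg.2 ht.1.le) (sub_nonneg.2 (hmin hmem))

theorem lineDeriv_le_sub_of_convexOn {f' : ℝ} (hf : ConvexOn ℝ s f) (hx : x ∈ s) (hy : y ∈ s)
    (hf' : HasLineDerivAt ℝ f f' x (y - x)) : f' ≤ f y - f x := by
  have hline : ConvexOn ℝ (AffineMap.lineMap x y ⁻¹' s) fun t : ℝ ↦ f (x + t • (y - x)) := by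
    simpa [Function.comp_def, AffineMap.lineMap_apply, add_comm] using
      hf.comp_affineMap (AffineMap.lineMap x y : ℝ →ᵃ[ℝ] E)
  simpa [slope_def_field] using
    hline.le_slope_of_hasDerivAt (x := 0) (y := 1) (by simpa) (by simpa) one_pos hf'

theorem isMinOn_iff_forall_lineDeriv_nonneg {f' : E → ℝ} (hf : ConvexOn ℝ s f) (hx : x ∈ s)
    (hf' : ∀ y ∈ s, HasLineDerivAt ℝ f (f' y) x (y - x)) :
    IsMinOn f s x ↔ ∀ y ∈ s, 0 ≤ f' y :=
  ⟨fun hmin y hy ↦ lineDeriv_nonneg_of_isMinOn hf.1 hx hy hmin (hf' y hy), fun h y hy ↦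
    sub_nonneg.1 ((h y hy).trans (lineDeriv_le_sub_of_convexOn hf hx hy (hf' y hy)))⟩

theorem convexOn_finsetSum {ι : Type*} {t : Finset ι} {f : ι → E → ℝ} (hs : Convex ℝ s)
    (hf : ∀ i ∈ t, ConvexOn ℝ s (f i)) : ConvexOn ℝ s fun x ↦ ∑ i ∈ t, f i x := by
  simpa [Finset.sum_fn] using
    Finset.sum_induction f (ConvexOn ℝ s) (fun _ _ ↦ ConvexOn.add) (convexOn_const 0 hs) hf

theorem forall_mem_stdSimplex_le_dotProduct_iff {ι : Type*} [Fintype ι] {g : ι → ℝ} {c : ℝ} :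
    (∀ w ∈ stdSimplex ℝ ι, c ≤ g ⬝ᵥ w) ↔ ∀ i, c ≤ g i := by
  classical
  refine ⟨fun h i ↦ by simpa using h _ (single_mem_stdSimplex ℝ i), fun h w hw ↦ ?_⟩
  calc c = ∑ i, c * w i := by rw [← Finset.mul_sum, hw.2, mul_one]
    _ ≤ g ⬝ᵥ w := Finset.sum_le_sum fun i _ ↦ mul_le_mul_of_nonneg_right (h i) (hw.1 i)

theorem isMinOn_stdSimplex_iff {ι : Type*} [Fintype ι] {f : (ι → ℝ) → ℝ} {g w : ι → ℝ}
    (hf : ConvexOn ℝ (stdSimplex ℝ ι) f) (hw : w ∈ stdSimplex ℝ ι)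
    (hg : ∀ d, HasLineDerivAt ℝ f (g ⬝ᵥ d) w d) :
    IsMinOn f (stdSimplex ℝ ι) w ↔ ∀ i, g ⬝ᵥ w ≤ g i := by
  rw [isMinOn_iff_forall_lineDeriv_nonneg hf hw fun y _ ↦ hg (y - w),
    ← forall_mem_stdSimplex_le_dotProduct_iff]
  simp only [dotProduct_sub, sub_nonneg]

end FirstOrder

section Danskin

variable {X : Type*} [TopologicalSpace X] {K : Set X} {f g : X → ℝ} {m : ℝ → ℝ} {c : ℝ}

theorem tendsto_of_isLeast_add_mul (hK : IsCompact K) (hf : ContinuousOn f K)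
    (hg : ContinuousOn g K) (hm : ∀ t, IsLeast ((fun x ↦ f x + t * g x) '' K) (m t))
    (hc : ∀ x ∈ K, f x = m 0 → g x = c) {u : ℝ → X} (huK : ∀ t, u t ∈ K)
    (hu : ∀ t, f (u t) + t * g (u t) = m t) : Tendsto (g ∘ u) (𝓝 0) (𝓝 c) := by
  refine (tendsto_iff_ultrafilter _ _ _).2 fun F hF ↦ ?_
  obtain ⟨x, hxK, hux⟩ : ∃ x ∈ K, Tendsto u F (𝓝 x) :=
    hK.ultrafilter_le_nhds (F.map u) (tendsto_principal.2 (Eventually.of_forall huK))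
  have huxK : Tendsto u F (𝓝[K] x) := tendsto_nhdsWithin_iff.2 ⟨hux, Eventually.of_forall huK⟩
  have hfx : Tendsto (f ∘ u) F (𝓝 (f x)) := (hf x hxK).tendsto.comp huxK
  have hgx : Tendsto (g ∘ u) F (𝓝 (g x)) := (hg x hxK).tendsto.comp huxK
  have hle : ∀ y ∈ K, f x ≤ f y := fun y hy ↦ by
    have hlim : f x + 0 * g x ≤ f y + 0 * g y :=
      le_of_tendsto_of_tendsto' (hfx.add (Tendsto.mul hF hgx))
        (tendsto_const_nhds.add (Tendsto.mul_const _ hF))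
        fun t ↦ (hu t).trans_le ((hm t).2 (Set.mem_image_of_mem _ hy))
    simpa using hlim
  have hfm : f x = m 0 :=
    le_antisymm (by simpa using (hle _ (huK 0)).trans_eq (by simpa using hu 0))
      (by simpa using (hm 0).2 (Set.mem_image_of_mem _ hxK))
  exact hc x hxK hfm ▸ hgx

theorem hasDerivAt_of_isLeast_add_mul (hK : IsCompact K) (hf : ContinuousOn f K)
    (hg : ContinuousOn g K) (hm : ∀ t, IsLeast ((fun x ↦ f x + t * g x) '' K) (m t))
    (hc : ∀ x ∈ K, f x = m 0 → g x = c) : HasDerivAt m c 0 := by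
  choose u huK hu using fun t ↦ (hm t).1
  have hgc : g (u 0) = c := hc _ (huK 0) (by simpa using hu 0)
  have hlim := tendsto_of_isLeast_add_mul hK hf hg hm hc huK hu
  have hbound (t : ℝ) : ‖m t - m 0 - t * c‖ ≤ ‖t * (g (u t) - c)‖ := by
    have hu0 : f (u 0) = m 0 := by simpa using hu 0
    have hupper : m t - m 0 - t * c ≤ 0 := by
      have := (hm t).2 (Set.mem_image_of_mem _ (huK 0))
      simp only [hu0, hgc] at this
      linarith
    have hlower : t * (g (u t) - c) ≤ m t - m 0 - t * c := by
      have := (hm 0).2 (Set.mem_image_of_mem _ (huK t))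
      linarith [hu t]
    rw [Real.norm_of_nonpos hupper, Real.norm_of_nonpos (hlower.trans hupper)]
    exact neg_le_neg hlower
  have hlittle : (fun t ↦ t * (g (u t) - c)) =o[𝓝 0] fun t : ℝ ↦ t := by
    simpa using (Asymptotics.isBigO_refl (fun t : ℝ ↦ t) (𝓝 0)).mul_isLittleO
      ((Asymptotics.isLittleO_one_iff ℝ).2 (by simpa using hlim.sub_const c))
  rw [hasDerivAt_iff_isLittleO]
  simpa using (Asymptotics.IsBigO.of_norm_le hbound).trans_isLittleO hlittle.norm_left

end Danskin

section SmallestEigenvalue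

variable {q : ℕ} {A B M : Matrix (Fin q) (Fin q) ℝ} {v : Fin q → ℝ}

theorem finite_setOf_eigenvalue (M : Matrix (Fin q) (Fin q) ℝ) :
    {r : ℝ | ∃ v : Fin q → ℝ, v ≠ 0 ∧ M *ᵥ v = r • v}.Finite := by
  refine (Module.End.finite_hasEigenvalue (Matrix.toLin' M)).subset ?_
  rintro r ⟨v, hv, h⟩
  exact Module.End.hasEigenvalue_of_hasEigenvector
    ⟨Module.End.mem_eigenspace_iff.2 (by simpa using h), hv⟩

theorem lambdaMin_le_of_mulVec_eq_smul {r : ℝ} (hv : v ≠ 0) (h : M *ᵥ v = r • v) :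
    lambdaMin M ≤ r :=
  csInf_le (finite_setOf_eigenvalue M).bddBelow ⟨v, hv, h⟩

theorem ofLp_eigenvectorBasis_ne_zero (hM : M.IsHermitian) (j : Fin q) :
    (hM.eigenvectorBasis j : Fin q → ℝ) ≠ 0 :=
  (WithLp.ofLp_eq_zero 2).not.2 (hM.eigenvectorBasis.orthonormal.ne_zero j)

theorem posSemidef_sub_lambdaMin_smul_one (hM : M.IsHermitian) :
    (M - lambdaMin M • (1 : Matrix (Fin q) (Fin q) ℝ)).PosSemidef := by
  have hH : (M - lambdaMin M • (1 : Matrix (Fin q) (Fin q) ℝ)).IsHermitian :=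
    hM.sub (isHermitian_one.smul (IsSelfAdjoint.all _))
  refine hH.posSemidef_iff_eigenvalues_nonneg.2 fun j ↦ ?_
  have heig := hH.mulVec_eigenvectorBasis j
  rw [sub_mulVec, smul_mulVec, one_mulVec, sub_eq_iff_eq_add, ← add_smul] at heig
  simpa using lambdaMin_le_of_mulVec_eq_smul (ofLp_eigenvectorBasis_ne_zero hH j) heig

theorem dotProduct_sub_lambdaMin_smul_one_mulVec (hv : v ⬝ᵥ v = 1) :
    v ⬝ᵥ (M - lambdaMin M • (1 : Matrix (Fin q) (Fin q) ℝ)) *ᵥ v =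
      v ⬝ᵥ M *ᵥ v - lambdaMin M := by
  simp [sub_mulVec, smul_mulVec, hv]

theorem lambdaMin_le_dotProduct_mulVec (hM : M.IsHermitian) (hv : v ⬝ᵥ v = 1) :
    lambdaMin M ≤ v ⬝ᵥ M *ᵥ v := by
  have h := (posSemidef_sub_lambdaMin_smul_one hM).dotProduct_mulVec_nonneg v
  rwa [star_trivial, dotProduct_sub_lambdaMin_smul_one_mulVec hv, sub_nonneg] at h

theorem dotProduct_mulVec_eq_lambdaMin_iff (hM : M.IsHermitian) (hv : v ⬝ᵥ v = 1) :
    v ⬝ᵥ M *ᵥ v = lambdaMin M ↔ M *ᵥ v = lambdaMin M • v := by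
  have h := (posSemidef_sub_lambdaMin_smul_one hM).dotProduct_mulVec_zero_iff v
  rwa [star_trivial, dotProduct_sub_lambdaMin_smul_one_mulVec hv, sub_eq_zero, sub_mulVec,
    smul_mulVec, one_mulVec, sub_eq_zero] at h

theorem exists_dotProduct_self_eq_one_mulVec_eq_lambdaMin_smul [NeZero q] (hM : M.IsHermitian) :
    ∃ v : Fin q → ℝ, v ⬝ᵥ v = 1 ∧ M *ᵥ v = lambdaMin M • v := by
  obtain ⟨v, hv, h⟩ : lambdaMin M ∈ {r : ℝ | ∃ v : Fin q → ℝ, v ≠ 0 ∧ M *ᵥ v = r • v} :=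
    Set.Nonempty.csInf_mem
      ⟨_, _, ofLp_eigenvectorBasis_ne_zero hM 0, hM.mulVec_eigenvectorBasis 0⟩
      (finite_setOf_eigenvalue M)
  have hpos : 0 < v ⬝ᵥ v := by simpa using dotProduct_star_self_pos_iff.2 hv
  refine ⟨(√(v ⬝ᵥ v))⁻¹ • v, ?_, by rw [mulVec_smul, h, smul_comm]⟩
  rw [smul_dotProduct, dotProduct_smul, smul_eq_mul, smul_eq_mul, ← mul_assoc, ← mul_inv,
    Real.mul_self_sqrt hpos.le, inv_mul_cancel₀ hpos.ne']

theorem isLeast_lambdaMin [NeZero q] (hM : M.IsHermitian) :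
    IsLeast ((fun v ↦ v ⬝ᵥ M *ᵥ v) '' {v : Fin q → ℝ | v ⬝ᵥ v = 1}) (lambdaMin M) := by
  obtain ⟨v, hv, h⟩ := exists_dotProduct_self_eq_one_mulVec_eq_lambdaMin_smul hM
  refine ⟨⟨v, hv, (dotProduct_mulVec_eq_lambdaMin_iff hM hv).2 h⟩, ?_⟩
  rintro _ ⟨w, hw, rfl⟩
  exact lambdaMin_le_dotProduct_mulVec hM hw

theorem concaveOn_lambdaMin [NeZero q] :
    ConcaveOn ℝ {M : Matrix (Fin q) (Fin q) ℝ | M.IsHermitian} lambdaMin := by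
  have hconv : Convex ℝ {M : Matrix (Fin q) (Fin q) ℝ | M.IsHermitian} :=
    (selfAdjoint.submodule ℝ (Matrix (Fin q) (Fin q) ℝ)).convex
  refine ⟨hconv, fun A hA B hB a b ha hb hab ↦ ?_⟩
  obtain ⟨v, hv, hmin⟩ := (isLeast_lambdaMin (hconv hA hB ha hb hab)).1
  calc a • lambdaMin A + b • lambdaMin B ≤ a • (v ⬝ᵥ A *ᵥ v) + b • (v ⬝ᵥ B *ᵥ v) := by
        gcongr
        exacts [lambdaMin_le_dotProduct_mulVec hA hv, lambdaMin_le_dotProduct_mulVec hB hv]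
    _ = v ⬝ᵥ (a • A + b • B) *ᵥ v := by simp [add_mulVec, smul_mulVec]
    _ = lambdaMin (a • A + b • B) := hmin

theorem isCompact_setOf_dotProduct_self_eq_one {ι : Type*} [Fintype ι] :
    IsCompact {v : ι → ℝ | v ⬝ᵥ v = 1} := by
  have himage : {v : ι → ℝ | v ⬝ᵥ v = 1} =
      WithLp.toLp 2 ⁻¹' Metric.sphere (0 : EuclideanSpace ℝ ι) 1 := by
    ext v
    simp [EuclideanSpace.norm_eq, dotProduct, sq]
  rw [himage]
  exact (PiLp.homeomorph 2 fun _ : ι ↦ ℝ).symm.isClosedEmbedding.isCompact_preimage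
    (isCompact_sphere 0 1)

theorem hasDerivAt_lambdaMin_add_smul (hA : A.IsHermitian) (hB : B.IsHermitian)
    (hv : v ⬝ᵥ v = 1) (hspan : ∀ u, A *ᵥ u = lambdaMin A • u → ∃ c : ℝ, u = c • v) :
    HasDerivAt (fun t : ℝ ↦ lambdaMin (A + t • B)) (v ⬝ᵥ B *ᵥ v) 0 := by
  have : NeZero q := ⟨by rintro rfl; simp at hv⟩
  refine hasDerivAt_of_isLeast_add_mul isCompact_setOf_dotProduct_self_eq_one
    (f := fun u ↦ u ⬝ᵥ A *ᵥ u) (g := fun u ↦ u ⬝ᵥ B *ᵥ u) (by fun_prop) (by fun_prop)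
    (fun t ↦ ?_) fun u hu hAu ↦ ?_
  · simpa [add_mulVec, smul_mulVec] using
      isLeast_lambdaMin (hA.add (hB.smul (IsSelfAdjoint.all t)))
  · obtain ⟨c, rfl⟩ := hspan u
      ((dotProduct_mulVec_eq_lambdaMin_iff hA hu).1 (by simpa using hAu))
    have hc : c * c = 1 := by simpa [hv] using hu
    simp [mulVec_smul, ← mul_assoc, hc]

end SmallestEigenvalue

section InformationMatrix

variable {N q : ℕ} (z : Fin N → Fin q → ℝ)

theorem infoMat_eq_linearCombination :
    infoMat z = Fintype.linearCombination ℝ fun i ↦ vecMulVec (z i) (z i) :=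
  rfl

theorem infoMat_add_smul (w d : Fin N → ℝ) (t : ℝ) :
    infoMat z (w + t • d) = infoMat z w + t • infoMat z d := by
  rw [infoMat_eq_linearCombination, map_add, map_smul]

theorem isHermitian_infoMat (w : Fin N → ℝ) : (infoMat z w).IsHermitian := by
  ext a b
  simp [infoMat, Matrix.sum_apply, vecMulVec_apply, mul_comm]

theorem map_infoMat {F : Type*} [FunLike F (Matrix (Fin q) (Fin q) ℝ) ℝ]
    [LinearMapClass F ℝ (Matrix (Fin q) (Fin q) ℝ) ℝ] (L : F) (w : Fin N → ℝ) :
    L (infoMat z w) = (fun i ↦ L (vecMulVec (z i) (z i))) ⬝ᵥ w := by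
  simp [infoMat, dotProduct, map_sum, mul_comm]

theorem dotProduct_infoMat_mulVec (v : Fin q → ℝ) (w : Fin N → ℝ) :
    v ⬝ᵥ infoMat z w *ᵥ v = (fun i ↦ (v ⬝ᵥ z i) ^ 2) ⬝ᵥ w := by
  simp only [infoMat, sum_mulVec, dotProduct_sum, smul_mulVec, dotProduct_smul, vecMulVec_mulVec]
  refine Finset.sum_congr rfl fun i _ ↦ ?_
  simp [dotProduct_comm (z i) v, sq, mul_comm]

theorem concaveOn_lambdaMin_infoMat [NeZero q] :
    ConcaveOn ℝ Set.univ fun w ↦ lambdaMin (infoMat z w) :=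
  (concaveOn_lambdaMin.comp_linearMap
    (Fintype.linearCombination ℝ fun i ↦ vecMulVec (z i) (z i))).subset
      (fun w _ ↦ isHermitian_infoMat z w) convex_univ

variable {z} {w : Fin N → ℝ}

theorem hasLineDerivAt_lambdaMin_infoMat {v : Fin q → ℝ} (hv : v ⬝ᵥ v = 1)
    (hspan : ∀ u, infoMat z w *ᵥ u = lambdaMin (infoMat z w) • u → ∃ c : ℝ, u = c • v)
    (d : Fin N → ℝ) :
    HasLineDerivAt ℝ (fun w ↦ lambdaMin (infoMat z w)) ((fun i ↦ (v ⬝ᵥ z i) ^ 2) ⬝ᵥ d) w d := by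
  simpa only [HasLineDerivAt, infoMat_add_smul, dotProduct_infoMat_mulVec] using
    hasDerivAt_lambdaMin_add_smul (isHermitian_infoMat z w) (isHermitian_infoMat z d) hv hspan

theorem hasLineDerivAt_comp_infoMat {φ : Matrix (Fin q) (Fin q) ℝ → ℝ}
    {L : Matrix (Fin q) (Fin q) ℝ →L[ℝ] ℝ} (hφ : HasFDerivAt φ L (infoMat z w))
    (d : Fin N → ℝ) :
    HasLineDerivAt ℝ (fun w ↦ φ (infoMat z w)) ((fun i ↦ L (vecMulVec (z i) (z i))) ⬝ᵥ d) w d := by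
  simp only [HasLineDerivAt, infoMat_add_smul, ← map_infoMat]
  exact hφ.hasLineDerivAt (infoMat z d)

end InformationMatrix

section CompoundCriterion

variable {N q₁ : ℕ} {ι : Type*} [Fintype ι] {q : ι → ℕ} (z₁ : Fin N → Fin q₁ → ℝ)
  (z : ∀ k, Fin N → Fin (q k) → ℝ) (φ : ∀ k, Matrix (Fin (q k)) (Fin (q k)) ℝ → ℝ) (η : ι → ℝ)

/-- The objective `Φ₁ + ∑ₖ ηₖ Φₖ`, with `ι` indexing the criteria `k = 2, …, K`. -/
def compoundCriterion (w : Fin N → ℝ) : ℝ :=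
  -lambdaMin (infoMat z₁ w) + ∑ k, η k * φ k (infoMat (z k) w)

/-- The gradient of `compoundCriterion` as a function of the weights, at a point where `v` is the
unit eigenvector of the simple smallest eigenvalue of the first information matrix and `L k` is the
derivative of `φ k` at the `k`-th one. -/
def compoundGradient (v : Fin q₁ → ℝ) (L : ∀ k, Matrix (Fin (q k)) (Fin (q k)) ℝ →L[ℝ] ℝ)
    (i : Fin N) : ℝ :=
  -(v ⬝ᵥ z₁ i) ^ 2 + ∑ k, η k * L k (vecMulVec (z k i) (z k i))

variable {z₁ z φ η} {w : Fin N → ℝ} {v : Fin q₁ → ℝ}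
  {L : ∀ k, Matrix (Fin (q k)) (Fin (q k)) ℝ →L[ℝ] ℝ}

theorem convexOn_compoundCriterion [NeZero q₁] (hφ : ∀ k, ConvexOn ℝ Set.univ (φ k))
    (hη : ∀ k, 0 ≤ η k) : ConvexOn ℝ Set.univ (compoundCriterion z₁ z φ η) := by
  refine (concaveOn_lambdaMin_infoMat z₁).neg.add (convexOn_finsetSum convex_univ fun k _ ↦ ?_)
  exact ((hφ k).comp_linearMap
    (Fintype.linearCombination ℝ fun i ↦ vecMulVec (z k i) (z k i))).smul (hη k)

theorem compoundGradient_dotProduct (d : Fin N → ℝ) :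
    compoundGradient z₁ z η v L ⬝ᵥ d = -((fun i ↦ (v ⬝ᵥ z₁ i) ^ 2) ⬝ᵥ d) +
      ∑ k, η k * ((fun i ↦ L k (vecMulVec (z k i) (z k i))) ⬝ᵥ d) := by
  simp only [compoundGradient, dotProduct, add_mul, neg_mul, Finset.sum_add_distrib,
    Finset.sum_neg_distrib, Finset.sum_mul, Finset.mul_sum, mul_assoc]
  rw [Finset.sum_comm]

theorem compoundGradient_dotProduct_of_eigenvector (hv : v ⬝ᵥ v = 1)
    (heig : infoMat z₁ w *ᵥ v = lambdaMin (infoMat z₁ w) • v) :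
    compoundGradient z₁ z η v L ⬝ᵥ w =
      -lambdaMin (infoMat z₁ w) + ∑ k, η k * L k (infoMat (z k) w) := by
  rw [compoundGradient_dotProduct, ← dotProduct_infoMat_mulVec,
    (dotProduct_mulVec_eq_lambdaMin_iff (isHermitian_infoMat z₁ w) hv).2 heig]
  simp only [map_infoMat]

theorem hasLineDerivAt_compoundCriterion (hv : v ⬝ᵥ v = 1)
    (hspan : ∀ u, infoMat z₁ w *ᵥ u = lambdaMin (infoMat z₁ w) • u → ∃ c : ℝ, u = c • v)
    (hφ : ∀ k, HasFDerivAt (φ k) (L k) (infoMat (z k) w)) (d : Fin N → ℝ) :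
    HasLineDerivAt ℝ (compoundCriterion z₁ z φ η) (compoundGradient z₁ z η v L ⬝ᵥ d) w d := by
  rw [compoundGradient_dotProduct]
  exact (hasLineDerivAt_lambdaMin_infoMat hv hspan d).neg.add
    (HasDerivAt.fun_sum fun k _ ↦ (hasLineDerivAt_comp_infoMat (hφ k) d).const_mul (η k))

end CompoundCriterion

theorem simplex_eq_stdSimplex (N : ℕ) : simplex N = stdSimplex ℝ (Fin N) := by
  ext w
  exact and_comm

/-- in the setting of Statement 12, if moreover the eigenspace of `I₁(w*)`
associated with `λ_min(I₁(w*))` is one-dimensional, spanned by the unit eigenvector `v*`, then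
`w*` minimizes `Φ₁ + Σ_k η_k Φ_k` over the simplex iff
`(v*ᵀ z_{1,i})² − λ_min(I₁(w*)) + Σ_k η_k d_k(i, w*) ≤ 0` for all `i`. -/
theorem stmt13 {N q₁ m : ℕ} (hm : 1 ≤ m)
    (z₁ : Fin N → Fin q₁ → ℝ)
    (q : Fin m → ℕ)
    (z : ∀ k : Fin m, Fin N → Fin (q k) → ℝ)
    (φ : ∀ k : Fin m, Matrix (Fin (q k)) (Fin (q k)) ℝ → ℝ)
    (hφconv : ∀ k, ConvexOn ℝ Set.univ (φ k))
    (ws : Fin N → ℝ) (hws : ws ∈ simplex N)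
    (L : ∀ k : Fin m, Matrix (Fin (q k)) (Fin (q k)) ℝ →L[ℝ] ℝ)
    (hdiff : ∀ k, HasFDerivAt (φ k) (L k) (infoMat (z k) ws))
    (G : ∀ k : Fin m, Matrix (Fin (q k)) (Fin (q k)) ℝ)
    (hG : ∀ k, ∀ H : Matrix (Fin (q k)) (Fin (q k)) ℝ, L k H = Matrix.trace ((G k)ᵀ * H))
    (η : Fin m → ℝ) (hη : ∀ k, 0 ≤ η k)
    (vs : Fin q₁ → ℝ) (hunit : ∑ j, vs j ^ 2 = 1)
    (heig : (infoMat z₁ ws).mulVec vs = lambdaMin (infoMat z₁ ws) • vs)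
    (hspan : ∀ v : Fin q₁ → ℝ,
      (infoMat z₁ ws).mulVec v = lambdaMin (infoMat z₁ ws) • v → ∃ c : ℝ, v = c • vs) :
    (∀ w ∈ simplex N,
        -(lambdaMin (infoMat z₁ ws)) + (∑ k, η k * φ k (infoMat (z k) ws)) ≤
          -(lambdaMin (infoMat z₁ w)) + ∑ k, η k * φ k (infoMat (z k) w)) ↔
      ∀ i : Fin N,
        (dotp vs (z₁ i)) ^ 2 - lambdaMin (infoMat z₁ ws) +
          (∑ k, η k * Matrix.trace ((G k)ᵀ *
            (infoMat (z k) ws - Matrix.vecMulVec (z k i) (z k i)))) ≤ 0 := by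
  have hv : vs ⬝ᵥ vs = 1 := by simpa only [dotProduct, ← sq] using hunit
  have : NeZero q₁ := ⟨by rintro rfl; simp at hv⟩
  have hconv : ConvexOn ℝ (stdSimplex ℝ (Fin N)) (compoundCriterion z₁ z φ η) :=
    (convexOn_compoundCriterion hφconv hη).subset (Set.subset_univ _) (convex_stdSimplex ℝ _)
  rw [simplex_eq_stdSimplex] at hws ⊢
  refine (isMinOn_stdSimplex_iff hconv hws
    (hasLineDerivAt_compoundCriterion hv hspan hdiff)).trans (forall_congr' fun i ↦ ?_)
  rw [compoundGradient_dotProduct_of_eigenvector hv heig, compoundGradient, ← sub_nonpos]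
  have htrace : ∑ k, η k * trace ((G k)ᵀ * (infoMat (z k) ws - vecMulVec (z k i) (z k i))) =
      ∑ k, η k * L k (infoMat (z k) ws) - ∑ k, η k * L k (vecMulVec (z k i) (z k i)) := by
    simp only [← hG, map_sub]
    simp only [mul_sub, Finset.sum_sub_distrib]
  have hdotp : dotp vs (z₁ i) = vs ⬝ᵥ z₁ i := rfl
  rw [htrace, hdotp]
  ring_nf
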